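/- arXiv:1406.4429 — 3 statements merged into one kernel-verified Lean document; each statement's English description precedes it below -/
import Mathlib

section
/- Entropy dissipation of the BGK operator: let d ≥ 1 and let f : ℝ^d → ℝ be measurable with f(v) > 0 for a.e. v, such that f, v f, |v|² f, f·log f and M_U·log f are integrable, where ρ > 0, T > 0, u ∈ ℝ^d are determined by the moments of f, i.e. ⟨f⟩ = ρ, ⟨v f⟩ = ρu and ⟨|v|² f⟩ = ρ|u|² + dρT. Then ∫_{ℝ^d} (M_U(v) − f(v)) · log f(v) dv ≤ 0. -/
/-!
Write `M` for the Maxwellian. Monotonicity of the logarithm gives the pointwise inequality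
`(M - f) (log f - log M) ≤ 0` wherever `f > 0`, so that
`∫ (M - f) log f ≤ ∫ (M - f) log M`.
Since `log M` is an affine function of `‖v - u‖ ^ 2`, the right-hand side vanishes as soon as `M`
and `f` have the same mass and the same second moment about `u`.

The moments of `M` reduce to those of `exp (-b ‖v‖ ^ 2)`. Its mass `(π / b) ^ (d / 2)` is in Mathlib;
the second moment (`integral_normSq_mul_gaussian`) is minus the derivative of the mass in `b`.
-/

open MeasureTheory Real

noncomputable def maxwellian (d : ℕ) (ρ T : ℝ) (u : EuclideanSpace ℝ (Fin d)) :
    EuclideanSpace ℝ (Fin d) → ℝ :=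
  fun v => ρ / (2 * Real.pi * T) ^ ((d : ℝ) / 2) * Real.exp (-‖v - u‖ ^ 2 / (2 * T))

theorem integrable_gaussian_normSq (d : ℕ) {b : ℝ} (hb : 0 < b) :
    Integrable fun v : EuclideanSpace ℝ (Fin d) => Real.exp (-b * ‖v‖ ^ 2) := by
  apply Integrable.of_integral_ne_zero
  rw [GaussianFourier.integral_rexp_neg_mul_sq_norm hb]
  positivity

theorem integrable_normSq_mul_gaussian (d : ℕ) {b : ℝ} (hb : 0 < b) :
    Integrable fun v : EuclideanSpace ℝ (Fin d) => ‖v‖ ^ 2 * Real.exp (-b * ‖v‖ ^ 2) := by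
  refine ((integrable_gaussian_normSq d (half_pos hb)).const_mul (2 / b)).mono'
    (by fun_prop) (ae_of_all _ fun v => ?_)
  rw [Real.norm_of_nonneg (by positivity)]
  -- the bound is `r ≤ (2 / b) * exp (b * r / 2)` with `r = ‖v‖ ^ 2`
  have h1 : ‖v‖ ^ 2 ≤ 2 / b * Real.exp (b / 2 * ‖v‖ ^ 2) := by
    have h := Real.add_one_le_exp (b / 2 * ‖v‖ ^ 2)
    calc ‖v‖ ^ 2 = 2 / b * (b / 2 * ‖v‖ ^ 2) := by field_simp
      _ ≤ _ := by gcongr; linarith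
  calc ‖v‖ ^ 2 * Real.exp (-b * ‖v‖ ^ 2)
      ≤ 2 / b * Real.exp (b / 2 * ‖v‖ ^ 2) * Real.exp (-b * ‖v‖ ^ 2) := by gcongr
    _ = 2 / b * Real.exp (-(b / 2) * ‖v‖ ^ 2) := by
      rw [mul_assoc, ← Real.exp_add]; congr 2; ring

/-- The second moment of a centred Gaussian. Convexity of `exp` shows that the mass
`G c = (π / c) ^ (d / 2)` satisfies `G b - (c - b) * S ≤ G c` for every `c > 0`, where `S` is the
second moment at `b`. This line touches the graph of `G` at `c = b`, so `-S` is the derivative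
of `G` there. No differentiation under the integral sign is needed. -/
theorem integral_normSq_mul_gaussian (d : ℕ) {b : ℝ} (hb : 0 < b) :
    ∫ v : EuclideanSpace ℝ (Fin d), ‖v‖ ^ 2 * Real.exp (-b * ‖v‖ ^ 2) =
      d / (2 * b) * (Real.pi / b) ^ ((d : ℝ) / 2) := by
  set S := ∫ v : EuclideanSpace ℝ (Fin d), ‖v‖ ^ 2 * Real.exp (-b * ‖v‖ ^ 2) with hS
  have hG : ∀ {c : ℝ}, 0 < c → ∫ v : EuclideanSpace ℝ (Fin d), Real.exp (-c * ‖v‖ ^ 2) =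
      (Real.pi / c) ^ ((d : ℝ) / 2) := fun hc => by
    rw [GaussianFourier.integral_rexp_neg_mul_sq_norm hc, finrank_euclideanSpace_fin]
  have htangent : ∀ c : ℝ, 0 < c →
      (Real.pi / b) ^ ((d : ℝ) / 2) - (c - b) * S ≤ (Real.pi / c) ^ ((d : ℝ) / 2) := by
    intro c hc
    rw [← hG hb, ← hG hc, hS, ← integral_const_mul, ← integral_sub
      (integrable_gaussian_normSq d hb) ((integrable_normSq_mul_gaussian d hb).const_mul _)]
    refine integral_mono ((integrable_gaussian_normSq d hb).sub
      ((integrable_normSq_mul_gaussian d hb).const_mul _)) (integrable_gaussian_normSq d hc)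
      fun v => ?_
    have h := Real.add_one_le_exp (-(c - b) * ‖v‖ ^ 2)
    calc Real.exp (-b * ‖v‖ ^ 2) - (c - b) * (‖v‖ ^ 2 * Real.exp (-b * ‖v‖ ^ 2))
        = (-(c - b) * ‖v‖ ^ 2 + 1) * Real.exp (-b * ‖v‖ ^ 2) := by ring
      _ ≤ Real.exp (-(c - b) * ‖v‖ ^ 2) * Real.exp (-b * ‖v‖ ^ 2) := by gcongr
      _ = Real.exp (-c * ‖v‖ ^ 2) := by rw [← Real.exp_add]; congr 1; ring
  have hmin : IsLocalMin
      (fun c : ℝ => (Real.pi / c) ^ ((d : ℝ) / 2) + (c - b) * S) b := by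
    filter_upwards [lt_mem_nhds hb] with c hc
    have := htangent c hc
    simp only [sub_self, zero_mul, add_zero]
    linarith
  have hderiv : HasDerivAt (fun c : ℝ => (Real.pi / c) ^ ((d : ℝ) / 2) + (c - b) * S)
      ((-Real.pi / b ^ 2) * ((d : ℝ) / 2) * (Real.pi / b) ^ ((d : ℝ) / 2 - 1) + S) b := by
    have h1 : HasDerivAt (fun c : ℝ => Real.pi / c) (-Real.pi / b ^ 2) b := by
      have h := (hasDerivAt_const b Real.pi).fun_div (hasDerivAt_id' b) hb.ne'
      simpa using h
    have h2 : HasDerivAt (fun c : ℝ => (c - b) * S) S b := by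
      simpa using ((hasDerivAt_id b).sub_const b).mul_const S
    exact (h1.rpow_const (Or.inl (by positivity))).add h2
  have h0 := hmin.hasDerivAt_eq_zero hderiv
  rw [Real.rpow_sub_one (by positivity)] at h0
  have hpi := Real.pi_pos
  field_simp at h0 ⊢
  linarith

theorem maxwellian_eq (d : ℕ) (ρ T : ℝ) (u v : EuclideanSpace ℝ (Fin d)) :
    maxwellian d ρ T u v =
      ρ / (2 * Real.pi * T) ^ ((d : ℝ) / 2) * Real.exp (-(1 / (2 * T)) * ‖v - u‖ ^ 2) := by
  unfold maxwellian
  congr 2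
  ring

theorem integrable_maxwellian (d : ℕ) {ρ T : ℝ} (hT : 0 < T) (u : EuclideanSpace ℝ (Fin d)) :
    Integrable (maxwellian d ρ T u) := by
  simp_rw [funext (maxwellian_eq d ρ T u)]
  exact ((integrable_gaussian_normSq d (b := 1 / (2 * T)) (by positivity)).comp_sub_right
    u).const_mul _

theorem integrable_normSq_mul_maxwellian (d : ℕ) {ρ T : ℝ} (hT : 0 < T)
    (u : EuclideanSpace ℝ (Fin d)) :
    Integrable fun v => ‖v - u‖ ^ 2 * maxwellian d ρ T u v := by
  simp_rw [maxwellian_eq, mul_left_comm]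
  exact ((integrable_normSq_mul_gaussian d (b := 1 / (2 * T)) (by positivity)).comp_sub_right
    u).const_mul _

theorem integral_maxwellian (d : ℕ) {ρ T : ℝ} (hT : 0 < T) (u : EuclideanSpace ℝ (Fin d)) :
    ∫ v, maxwellian d ρ T u v = ρ := by
  have hT' : 0 < 1 / (2 * T) := by positivity
  have hp := Real.pi_pos
  simp_rw [maxwellian_eq]
  rw [integral_const_mul, integral_sub_right_eq_self
    (fun v : EuclideanSpace ℝ (Fin d) => Real.exp (-(1 / (2 * T)) * ‖v‖ ^ 2)) u,
    GaussianFourier.integral_rexp_neg_mul_sq_norm hT', finrank_euclideanSpace_fin,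
    show Real.pi / (1 / (2 * T)) = 2 * Real.pi * T by field_simp]
  exact div_mul_cancel₀ _ (by positivity)

theorem integral_normSq_mul_maxwellian (d : ℕ) {ρ T : ℝ} (hT : 0 < T)
    (u : EuclideanSpace ℝ (Fin d)) :
    ∫ v, ‖v - u‖ ^ 2 * maxwellian d ρ T u v = d * ρ * T := by
  have hT' : 0 < 1 / (2 * T) := by positivity
  have hp := Real.pi_pos
  simp_rw [maxwellian_eq, mul_left_comm]
  rw [integral_const_mul, integral_sub_right_eq_self
    (fun v : EuclideanSpace ℝ (Fin d) => ‖v‖ ^ 2 * Real.exp (-(1 / (2 * T)) * ‖v‖ ^ 2)) u,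
    integral_normSq_mul_gaussian d hT',
    show Real.pi / (1 / (2 * T)) = 2 * Real.pi * T by field_simp]
  have : (2 * Real.pi * T) ^ ((d : ℝ) / 2) ≠ 0 := by positivity
  field_simp

theorem bgk_entropy_dissipation (d : ℕ) (hd : 1 ≤ d) (ρ T : ℝ) (hρ : 0 < ρ) (hT : 0 < T)
    (u : EuclideanSpace ℝ (Fin d)) (f : EuclideanSpace ℝ (Fin d) → ℝ)
    (hmeas : Measurable f) (hpos : ∀ᵐ v, 0 < f v)
    (hf : Integrable f)
    (hvf : Integrable fun v => f v • v)
    (hv2f : Integrable fun v => ‖v‖ ^ 2 * f v)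
    (hflogf : Integrable fun v => f v * Real.log (f v))
    (hMlogf : Integrable fun v => maxwellian d ρ T u v * Real.log (f v))
    (hmass : ∫ v, f v = ρ)
    (hmom : ∫ v, f v • v = ρ • u)
    (hen : ∫ v, ‖v‖ ^ 2 * f v = ρ * ‖u‖ ^ 2 + (d : ℝ) * ρ * T) :
    ∫ v, (maxwellian d ρ T u v - f v) * Real.log (f v) ≤ 0 := by
  have hp := Real.pi_pos
  have hMpos : ∀ v, 0 < maxwellian d ρ T u v := fun v => by
    unfold maxwellian
    positivity
  have hexpand : ∀ v, ‖v - u‖ ^ 2 * f v =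
      ‖v‖ ^ 2 * f v - 2 * inner ℝ u (f v • v) + ‖u‖ ^ 2 * f v := fun v => by
    rw [norm_sub_sq_real, inner_smul_right, real_inner_comm]
    ring
  have hi : Integrable fun v => inner ℝ u (f v • v) := hvf.const_inner u
  have hcross : Integrable fun v => ‖v‖ ^ 2 * f v - 2 * inner ℝ u (f v • v) :=
    hv2f.sub (hi.const_mul 2)
  have hf2 : Integrable fun v => ‖v - u‖ ^ 2 * f v := by
    simp_rw [hexpand]
    exact hcross.add (hf.const_mul _)
  have hf2_val : ∫ v, ‖v - u‖ ^ 2 * f v = d * ρ * T := by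
    simp_rw [hexpand]
    rw [integral_add hcross (hf.const_mul _),
      integral_sub hv2f (hi.const_mul 2), integral_const_mul, integral_const_mul, hen, hmass,
      integral_inner hvf, hmom, inner_smul_right, real_inner_self_eq_norm_sq]
    ring
  set a := Real.log (ρ / (2 * Real.pi * T) ^ ((d : ℝ) / 2)) with ha
  have hlogM : ∀ v, Real.log (maxwellian d ρ T u v) = a - 1 / (2 * T) * ‖v - u‖ ^ 2 := fun v => by
    rw [maxwellian_eq, Real.log_mul (by positivity) (by positivity), Real.log_exp, ha]
    ring
  have hsplit : ∀ v, (maxwellian d ρ T u v - f v) * Real.log (maxwellian d ρ T u v) =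
      a * (maxwellian d ρ T u v - f v) -
        1 / (2 * T) * (‖v - u‖ ^ 2 * maxwellian d ρ T u v - ‖v - u‖ ^ 2 * f v) := fun v => by
    rw [hlogM]
    ring
  have hM := integrable_maxwellian d (ρ := ρ) hT u
  have hM2 := integrable_normSq_mul_maxwellian d (ρ := ρ) hT u
  have hmass_diff : Integrable fun v => maxwellian d ρ T u v - f v := hM.sub hf
  have hsq_diff : Integrable fun v =>
      ‖v - u‖ ^ 2 * maxwellian d ρ T u v - ‖v - u‖ ^ 2 * f v := hM2.sub hf2
  have hint : Integrable fun v =>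
      (maxwellian d ρ T u v - f v) * Real.log (maxwellian d ρ T u v) := by
    simp_rw [hsplit]
    exact (hmass_diff.const_mul a).sub (hsq_diff.const_mul _)
  have hzero : ∫ v, (maxwellian d ρ T u v - f v) * Real.log (maxwellian d ρ T u v) = 0 := by
    simp_rw [hsplit]
    rw [integral_sub (hmass_diff.const_mul a) (hsq_diff.const_mul _), integral_const_mul,
      integral_const_mul, integral_sub hM hf, integral_sub hM2 hf2, integral_maxwellian d hT,
      integral_normSq_mul_maxwellian d hT, hmass, hf2_val]
    ring
  rw [← hzero]
  refine integral_mono_ae ?_ hint ?_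
  · simp_rw [sub_mul]
    exact hMlogf.sub hflogf
  · filter_upwards [hpos] with v hv
    rcases le_total (f v) (maxwellian d ρ T u v) with h | h
    · exact mul_le_mul_of_nonneg_left (Real.log_le_log hv h) (sub_nonneg.2 h)
    · exact mul_le_mul_of_nonpos_left (Real.log_le_log (hMpos v) h) (sub_nonpos.2 h)
end

section
/- One-dimensional derivative identity for the Maxwellian: let ρ, u, T : ℝ → ℝ be differentiable at x₀ with ρ(x₀) > 0 and T(x₀) > 0, and define M(x,v) = (ρ(x)/√(2πT(x)))·exp(−(v−u(x))²/(2T(x))). Let Π denote the projection Π_M associated to the parameters ρ(x₀), u(x₀), T(x₀), and let A(v) = ((v−u(x₀))²/(2T(x₀)) − 3/2)·(v−u(x₀))/√(T(x₀)). Then, as functions of v, (I − Π)( v ↦ v·∂_x M(x₀,v) ) (v) = A(v)·(T′(x₀)/√(T(x₀)))·M(x₀,v) for all v ∈ ℝ, where ∂_x M(x₀,v) is the partial derivative of M in x at x₀ for fixed v. -/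
/-!
Write `c = v - u` and `M` for the Maxwellian. Logarithmic differentiation gives
`∂ₓM = (ρ'/ρ + u' c / T + T'/T (c² / (2T) - 1/2)) M`, so `v ∂ₓM = (u + c) ∂ₓM` is a cubic polynomial
in `c` times `M`. The projection fixes `M`, `c M` and `c² M`, and sends `c³ M` to `3 T c M`
(`proj1_cubic`), so only the cubic coefficient `T' / (2T²)` contributes to the remainder, which is
`T' / (2T²) (c³ - 3 T c) M`. The action of the projection follows from the central moments
`ρ, 0, ρT, 0, 3ρT², 0` of `M`; these come from integrating
`(cⁿ⁺¹ M)' = (n+1) cⁿ M - cⁿ⁺² M / T` over the line (`moment_add_two`), starting from the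
Gaussian integral and `∫ M' = 0`.
-/

open MeasureTheory Real

noncomputable def maxwellian1 (ρ T u : ℝ) : ℝ → ℝ :=
  fun v => ρ / Real.sqrt (2 * Real.pi * T) * Real.exp (-(v - u) ^ 2 / (2 * T))

noncomputable def Afun (T u : ℝ) : ℝ → ℝ :=
  fun v => ((v - u) ^ 2 / (2 * T) - 3 / 2) * (v - u) / Real.sqrt T

noncomputable def proj1 (ρ T u : ℝ) (g : ℝ → ℝ) : ℝ → ℝ :=
  fun v =>
    ((1 / ρ) * (∫ w, g w)
      + (1 / (ρ * T)) * (∫ w, (w - u) * g w) * (v - u)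
      + (2 / ρ) * (∫ w, ((w - u) ^ 2 / (2 * T) - 1 / 2) * g w)
          * ((v - u) ^ 2 / (2 * T) - 1 / 2))
    * maxwellian1 ρ T u v

lemma integrable_moment (ρ u : ℝ) {T : ℝ} (hT : 0 < T) (n : ℕ) :
    Integrable (fun w => (w - u) ^ n * maxwellian1 ρ T u w) := by
  have hb : (0 : ℝ) < 1 / (2 * T) := by positivity
  have hn : (-1 : ℝ) < (n : ℝ) := by
    have : (0 : ℝ) ≤ (n : ℝ) := n.cast_nonneg
    linarith
  have h := ((integrable_rpow_mul_exp_neg_mul_sq hb hn).comp_sub_right u).const_mul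
    (ρ / Real.sqrt (2 * Real.pi * T))
  refine h.congr (Filter.Eventually.of_forall fun w => ?_)
  have e : -(1 / (2 * T)) * (w - u) ^ 2 = -(w - u) ^ 2 / (2 * T) := by ring
  simp only [maxwellian1, Real.rpow_natCast, e]
  ring

lemma hasDerivAt_maxwellian1_velocity (ρ u : ℝ) {T : ℝ} (hT : 0 < T) (w : ℝ) :
    HasDerivAt (maxwellian1 ρ T u) (-((w - u) / T) * maxwellian1 ρ T u w) w := by
  have h := (((((hasDerivAt_id w).sub_const u).pow 2).neg.div_const (2 * T)).exp).const_mul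
    (ρ / Real.sqrt (2 * Real.pi * T))
  refine h.congr_deriv ?_
  simp only [maxwellian1, id, Pi.neg_apply, Pi.pow_apply]
  field_simp
  norm_num

lemma moment_zero (ρ u : ℝ) {T : ℝ} (hT : 0 < T) :
    ∫ w, (w - u) ^ 0 * maxwellian1 ρ T u w = ρ := by
  have e : ∀ w : ℝ, (w - u) ^ 0 * maxwellian1 ρ T u w
      = ρ / Real.sqrt (2 * Real.pi * T) * Real.exp (-(1 / (2 * T)) * (w - u) ^ 2) := by
    intro w
    have e : -(1 / (2 * T)) * (w - u) ^ 2 = -(w - u) ^ 2 / (2 * T) := by ring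
    simp only [maxwellian1, e, pow_zero, one_mul]
  simp_rw [e]
  rw [integral_const_mul,
    integral_sub_right_eq_self (fun w : ℝ => Real.exp (-(1 / (2 * T)) * w ^ 2)) u,
    integral_gaussian]
  have e2 : Real.pi / (1 / (2 * T)) = 2 * Real.pi * T := by field_simp
  have hs : Real.sqrt (2 * Real.pi * T) ≠ 0 := by positivity
  rw [e2]
  field_simp

lemma moment_one (ρ u : ℝ) {T : ℝ} (hT : 0 < T) :
    ∫ w, (w - u) ^ 1 * maxwellian1 ρ T u w = 0 := by
  have e : ∀ w : ℝ, -((w - u) / T) * maxwellian1 ρ T u w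
      = (-1 / T) * ((w - u) ^ 1 * maxwellian1 ρ T u w) := fun w => by ring
  have h := integral_eq_zero_of_hasDerivAt_of_integrable
    (fun w => (hasDerivAt_maxwellian1_velocity ρ u hT w).congr_deriv (e w))
    ((integrable_moment ρ u hT 1).const_mul _)
    (by simpa using integrable_moment ρ u hT 0)
  rw [integral_const_mul] at h
  have : (-1 / T) ≠ 0 := by simp [hT.ne']
  exact (mul_eq_zero.mp h).resolve_left this

lemma moment_add_two (ρ u : ℝ) {T : ℝ} (hT : 0 < T) (n : ℕ) :
    ∫ w, (w - u) ^ (n + 2) * maxwellian1 ρ T u w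
      = T * (n + 1) * ∫ w, (w - u) ^ n * maxwellian1 ρ T u w := by
  have hd : ∀ w : ℝ, HasDerivAt (fun w => (w - u) ^ (n + 1) * maxwellian1 ρ T u w)
      ((n + 1) * ((w - u) ^ n * maxwellian1 ρ T u w)
        - (1 / T) * ((w - u) ^ (n + 2) * maxwellian1 ρ T u w)) w := by
    intro w
    have h := (((hasDerivAt_id w).sub_const u).pow (n + 1)).mul
      (hasDerivAt_maxwellian1_velocity ρ u hT w)
    refine h.congr_deriv ?_
    simp only [id, Pi.pow_apply, Nat.add_sub_cancel]
    push_cast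
    ring
  have i0 := (integrable_moment ρ u hT n).const_mul ((n : ℝ) + 1)
  have i2 := (integrable_moment ρ u hT (n + 2)).const_mul (1 / T)
  have h := integral_eq_zero_of_hasDerivAt_of_integrable hd (i0.sub i2)
    (integrable_moment ρ u hT (n + 1))
  rw [integral_sub i0 i2, integral_const_mul, integral_const_mul] at h
  field_simp at h
  linarith

lemma integral_quintic (ρ u : ℝ) {T : ℝ} (hT : 0 < T) (q : ℕ → ℝ) :
    ∫ w, (∑ k ∈ Finset.range 6, q k * (w - u) ^ k) * maxwellian1 ρ T u w
      = ρ * (q 0 + T * q 2 + 3 * T ^ 2 * q 4) := by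
  have h0 := moment_zero ρ u hT
  have h1 := moment_one ρ u hT
  have h2 := moment_add_two ρ u hT 0
  have h3 := moment_add_two ρ u hT 1
  have h4 := moment_add_two ρ u hT 2
  have h5 := moment_add_two ρ u hT 3
  simp only [zero_add, Nat.reduceAdd] at h2 h3 h4 h5
  rw [h0] at h2
  rw [h1] at h3
  rw [h2] at h4
  rw [h3] at h5
  simp_rw [Finset.sum_mul, mul_assoc]
  rw [integral_finsetSum _ fun k _ => (integrable_moment ρ u hT k).const_mul (q k)]
  simp_rw [integral_const_mul]
  simp only [Finset.sum_range_succ, Finset.sum_range_zero, h0, h1, h2, h3, h4, h5]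
  push_cast
  ring

/-- The projection fixes `M`, `c M`, `c² M` and sends `c³ M` to `3 T c M`, where `c = v - u`. -/
lemma proj1_cubic {ρ T : ℝ} (u : ℝ) (hρ : 0 < ρ) (hT : 0 < T) (a b c d v : ℝ) :
    proj1 ρ T u (fun w => (a + b * (w - u) + c * (w - u) ^ 2 + d * (w - u) ^ 3)
        * maxwellian1 ρ T u w) v
      = (a + (b + 3 * T * d) * (v - u) + c * (v - u) ^ 2) * maxwellian1 ρ T u v := by
  have key : ∀ (q : ℕ → ℝ) (g : ℝ → ℝ),
      (∀ w, g w = (∑ k ∈ Finset.range 6, q k * (w - u) ^ k) * maxwellian1 ρ T u w) →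
      ∫ w, g w = ρ * (q 0 + T * q 2 + 3 * T ^ 2 * q 4) := by
    intro q g hg
    rw [← integral_quintic ρ u hT q]
    exact integral_congr_ae (Filter.Eventually.of_forall hg)
  unfold proj1
  -- The vectors list the coefficients of `c⁰, …, c⁵` in the three moment integrands.
  rw [key (fun k => [a, b, c, d, 0, 0].getD k 0) _ (fun w => by
      simp [Finset.sum_range_succ]),
    key (fun k => [0, a, b, c, d, 0].getD k 0) _ (fun w => by
      simp [Finset.sum_range_succ]; ring),
    key (fun k => [-a / 2, -b / 2, a / (2 * T) - c / 2, b / (2 * T) - d / 2,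
        c / (2 * T), d / (2 * T)].getD k 0) _ (fun w => by
      simp [Finset.sum_range_succ]; ring)]
  congr 1
  simp
  field_simp
  ring

lemma deriv_maxwellian1_space {ρ u T : ℝ → ℝ} {x₀ : ℝ}
    (hρ : DifferentiableAt ℝ ρ x₀) (hu : DifferentiableAt ℝ u x₀)
    (hT : DifferentiableAt ℝ T x₀) (hρ0 : 0 < ρ x₀) (hT0 : 0 < T x₀) (v : ℝ) :
    deriv (fun x => maxwellian1 (ρ x) (T x) (u x) v) x₀
      = (deriv ρ x₀ / ρ x₀ + deriv u x₀ * (v - u x₀) / T x₀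
          + deriv T x₀ / T x₀ * ((v - u x₀) ^ 2 / (2 * T x₀) - 1 / 2))
        * maxwellian1 (ρ x₀) (T x₀) (u x₀) v := by
  have hp : 0 < 2 * Real.pi * T x₀ := by positivity
  have hs : 0 < Real.sqrt (2 * Real.pi * T x₀) := Real.sqrt_pos.mpr hp
  have h1 := hρ.hasDerivAt.div ((hT.hasDerivAt.const_mul (2 * Real.pi)).sqrt hp.ne') hs.ne'
  have h2 := (((hu.hasDerivAt.const_sub v).pow 2).neg.div (hT.hasDerivAt.const_mul 2)
    (by positivity)).exp
  have h := (h1.mul h2).deriv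
  have hq : Real.sqrt (2 * Real.pi * T x₀) ^ 2 = 2 * Real.pi * T x₀ := Real.sq_sqrt hp.le
  refine Eq.trans h ?_
  simp only [maxwellian1, Pi.neg_apply, Pi.pow_apply, Pi.div_apply]
  generalize Real.sqrt (2 * Real.pi * T x₀) = s at *
  generalize Real.exp _ = E
  have hpi : Real.pi = s ^ 2 / (2 * T x₀) := by rw [hq]; field_simp
  rw [hpi]
  field_simp
  ring

theorem deriv_maxwellian_identity_1d (ρ u T : ℝ → ℝ) (x₀ : ℝ)
    (hρ : DifferentiableAt ℝ ρ x₀) (hu : DifferentiableAt ℝ u x₀)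
    (hT : DifferentiableAt ℝ T x₀) (hρ0 : 0 < ρ x₀) (hT0 : 0 < T x₀) :
    ∀ v : ℝ,
      v * deriv (fun x => maxwellian1 (ρ x) (T x) (u x) v) x₀
        - proj1 (ρ x₀) (T x₀) (u x₀)
            (fun w => w * deriv (fun x => maxwellian1 (ρ x) (T x) (u x) w) x₀) v
      = Afun (T x₀) (u x₀) v * (deriv T x₀ / Real.sqrt (T x₀))
          * maxwellian1 (ρ x₀) (T x₀) (u x₀) v := by
  intro v
  have hd := deriv_maxwellian1_space hρ hu hT hρ0 hT0
  have hfun : (fun w => w * deriv (fun x => maxwellian1 (ρ x) (T x) (u x) w) x₀)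
      = fun w => (u x₀ * (deriv ρ x₀ / ρ x₀ - deriv T x₀ / (2 * T x₀))
          + (deriv ρ x₀ / ρ x₀ - deriv T x₀ / (2 * T x₀) + u x₀ * (deriv u x₀ / T x₀))
            * (w - u x₀)
          + (deriv u x₀ / T x₀ + u x₀ * (deriv T x₀ / (2 * T x₀ ^ 2))) * (w - u x₀) ^ 2
          + deriv T x₀ / (2 * T x₀ ^ 2) * (w - u x₀) ^ 3)
        * maxwellian1 (ρ x₀) (T x₀) (u x₀) w := by
    funext w
    rw [hd w]
    field_simp
    ring
  have hs : Real.sqrt (T x₀) ^ 2 = T x₀ := Real.sq_sqrt hT0.le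
  have hA : Afun (T x₀) (u x₀) v * (deriv T x₀ / Real.sqrt (T x₀))
      = ((v - u x₀) ^ 2 / (2 * T x₀) - 3 / 2) * (v - u x₀) * deriv T x₀ / T x₀ := by
    rw [Afun, div_mul_div_comm, ← sq, hs]
  rw [hA, hfun, proj1_cubic (u x₀) hρ0 hT0, hd v]
  field_simp
  ring
end

section
/- Heat conductivity coefficient in one dimension: for all parameters ρ > 0, T > 0, u ∈ ℝ, one has ∫_ℝ A(v)² · M(v) dv = (3/2)ρ; consequently the coefficient κ = T·⟨A·A·M⟩ appearing in the Navier–Stokes limit of the BGK equation equals (3/2)ρT. -/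
open MeasureTheory Real

/-!
With `w = v - u` and `b = 1 / (2T)`, the integrand `A² M` is a constant multiple of
`2 b w² (b w² - 3/2)² exp (-b w²)`. This function differs from `(3/2) exp (-b w²)` by the exact
derivative of `(-b² w⁵ + (b/2) w³ - (3/2) w) exp (-b w²)`, whose integral over `ℝ` vanishes, so
the Gaussian integral `∫ exp (-b w²) = √(π / b)` is all that remains to be evaluated.
-/

lemma integrable_pow_mul_gaussian {b : ℝ} (hb : 0 < b) (n : ℕ) :
    Integrable fun x : ℝ => x ^ n * exp (-b * x ^ 2) := by
  have h := integrable_rpow_mul_exp_neg_mul_sq hb (s := n)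
    (by have : (0 : ℝ) ≤ n := n.cast_nonneg
        linarith)
  simpa only [rpow_natCast] using h

lemma integral_centered {b : ℝ} (hb : 0 < b) :
    ∫ w : ℝ, 2 * b * w ^ 2 * (b * w ^ 2 - 3 / 2) ^ 2 * exp (-b * w ^ 2)
      = 3 / 2 * √(π / b) := by
  have hi := integrable_pow_mul_gaussian hb
  have hg : Integrable fun w : ℝ => 3 / 2 * exp (-b * w ^ 2) :=
    (integrable_exp_neg_mul_sq hb).const_mul _
  have hf : Integrable fun w : ℝ =>
      2 * b * w ^ 2 * (b * w ^ 2 - 3 / 2) ^ 2 * exp (-b * w ^ 2) := by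
    refine ((((hi 6).const_mul (2 * b ^ 3)).add ((hi 4).const_mul (-6 * b ^ 2))).add
      ((hi 2).const_mul (9 / 2 * b))).congr (Filter.Eventually.of_forall fun w => ?_)
    simp only [Pi.add_apply]
    ring
  have hP : Integrable fun w : ℝ =>
      (-b ^ 2 * w ^ 5 + b / 2 * w ^ 3 - 3 / 2 * w) * exp (-b * w ^ 2) := by
    refine ((((hi 5).const_mul (-b ^ 2)).add ((hi 3).const_mul (b / 2))).add
      ((hi 1).const_mul (-3 / 2))).congr (Filter.Eventually.of_forall fun w => ?_)
    simp only [Pi.add_apply]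
    ring
  have hd : ∀ w : ℝ, HasDerivAt
      (fun w : ℝ => (-b ^ 2 * w ^ 5 + b / 2 * w ^ 3 - 3 / 2 * w) * exp (-b * w ^ 2))
      (2 * b * w ^ 2 * (b * w ^ 2 - 3 / 2) ^ 2 * exp (-b * w ^ 2)
        - 3 / 2 * exp (-b * w ^ 2)) w := by
    intro w
    have h := ((((hasDerivAt_pow 5 w).const_mul (-b ^ 2)).add
      ((hasDerivAt_pow 3 w).const_mul (b / 2))).sub ((hasDerivAt_id' w).const_mul (3 / 2))).mul
      (((hasDerivAt_pow 2 w).const_mul (-b)).exp)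
    refine h.congr_deriv ?_
    simp only [Pi.add_apply, Pi.sub_apply]
    push_cast
    ring
  have h0 := integral_eq_zero_of_hasDerivAt_of_integrable hd (hf.sub hg) hP
  rw [integral_sub hf hg, integral_const_mul, integral_gaussian] at h0
  linarith

theorem heat_conductivity_1d (ρ T u : ℝ) (hρ : 0 < ρ) (hT : 0 < T) :
    (∫ v, Afun T u v ^ 2 * maxwellian1 ρ T u v = 3 / 2 * ρ) ∧
    T * (∫ v, Afun T u v ^ 2 * maxwellian1 ρ T u v) = 3 / 2 * ρ * T := by
  have key : ∫ v, Afun T u v ^ 2 * maxwellian1 ρ T u v = 3 / 2 * ρ := by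
    set b : ℝ := 1 / (2 * T) with hb
    have hb0 : 0 < b := by positivity
    have h1 : (fun v => Afun T u v ^ 2 * maxwellian1 ρ T u v) = fun v =>
        (fun w : ℝ => ρ / √(2 * π * T) *
          (2 * b * w ^ 2 * (b * w ^ 2 - 3 / 2) ^ 2 * exp (-b * w ^ 2))) (v - u) := by
      funext v
      have he : -(v - u) ^ 2 / (2 * T) = -b * (v - u) ^ 2 := by rw [hb]; ring
      simp only [Afun, maxwellian1]
      rw [he, div_pow, sq_sqrt hT.le, hb]
      field_simp
    have hs : π / b = 2 * π * T := by rw [hb]; field_simp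
    have hne : √(2 * π * T) ≠ 0 := by positivity
    rw [h1, integral_sub_right_eq_self (fun w : ℝ => ρ / √(2 * π * T) *
      (2 * b * w ^ 2 * (b * w ^ 2 - 3 / 2) ^ 2 * exp (-b * w ^ 2))) u, integral_const_mul, integral_centered hb0, hs]
    field_simp
  refine ⟨key, ?_⟩
  rw [key]
  ring
end
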